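/- Let d ≥ 1 and let ℰ⁺_d be the class of real-valued, continuous, integrable functions F : ℝ^d → ℝ with F ≥ 0 on ℝ^d and F̂(y) ≤ 0 for all |y| ≥ 1, and let C = sup over nonzero F ∈ ℰ⁺_d of F(0)/F̂(0). Then there exists a radial nonzero function G ∈ ℰ⁺_d attaining this supremum, i.e., G(0)/Ĝ(0) = C. -/

import Mathlib

open MeasureTheory Filter
open scoped FourierTransform Real

/-- The class 𝒜 sharp constant 𝒞(A). -/
noncomputable def Ccal (A : ℝ) : ℝ :=
  sSup { r : ℝ | ∃ F : ℝ → ℂ, Continuous F ∧ Integrable F ∧ F ≠ 0 ∧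
    r = (‖F 0‖ - A * ∫ t in {t : ℝ | 1 ≤ |t|}, ‖𝓕 F t‖) / ∫ x : ℝ, ‖F x‖ }

/-- 𝒞(∞), over the bandlimited class ℰ. -/
noncomputable def CcalInf : ℝ :=
  sSup { r : ℝ | ∃ F : ℝ → ℂ, Continuous F ∧ Integrable F ∧ F ≠ 0 ∧
    Function.support (𝓕 F) ⊆ Set.Icc (-1 : ℝ) 1 ∧
    r = ‖F 0‖ / ∫ x : ℝ, ‖F x‖ }

/-- Fourier transform of a real-valued function, as a real number (its real part). -/
noncomputable def FTr (F : ℝ → ℝ) (t : ℝ) : ℝ := (𝓕 (fun x => (F x : ℂ)) t).re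

/-- The class 𝒜⁺ sharp constant 𝒞⁺(A). -/
noncomputable def CcalPlus (A : ℝ) : ℝ :=
  sSup { r : ℝ | ∃ F : ℝ → ℝ, Continuous F ∧ Integrable F ∧ F ≠ 0 ∧ (∀ x, F (-x) = F x) ∧
    r = (F 0 - A * ∫ t in {t : ℝ | 1 ≤ |t|}, max (FTr F t) 0) / ∫ x : ℝ, |F x| }

/-- 𝒞⁺(∞), over the class ℰ⁺. -/
noncomputable def CcalPlusInf : ℝ :=
  sSup { r : ℝ | ∃ F : ℝ → ℝ, Continuous F ∧ Integrable F ∧ F ≠ 0 ∧ (∀ x, F (-x) = F x) ∧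
    (∀ t : ℝ, 1 ≤ |t| → FTr F t ≤ 0) ∧
    r = F 0 / ∫ x : ℝ, |F x| }

/-- The prime counting function at a real argument. -/
noncomputable def primePi (x : ℝ) : ℕ := Nat.primeCounting ⌊x⌋₊

/-- The Brun–Titchmarsh constant 𝐁. -/
noncomputable def BrunTitchmarsh : ℝ :=
  limsup (fun x : ℝ =>
    ((primePi (x + Real.sqrt x) : ℝ) - (primePi x : ℝ)) / (Real.sqrt x / Real.log x)) atTop

/-
Let `F` be admissible and let `χ` be the indicator of the unit ball `B`. The real part of `F̂` is at
most `(∫ F) χ`, so Gaussian regularization and Fatou's lemma make it integrable. For even `F`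
Fourier inversion then gives `∫ F̂ = F(0)` and `F ≤ 2 |B| ∫ F`. In particular the even admissible
functions with `∫ F = 1` are bounded in `L²`, and those with `F(0) ≥ c` form a convex set invariant
under linear isometries.

Let `C` be the supremum. The closures in `L²` of the sets obtained for `c = C - 1/(n+1)` decrease,
so they have a common point of minimal norm; being the only one, it is invariant under all linear
isometries, that is, radial. It is an `L²` limit of admissible functions `F_n`, whose Fourier
transforms converge in `L²` too by Plancherel. Along a subsequence both converge almost everywhere,
so Fatou's lemma yields `∫ G ≤ 1` for the limit `G` and, applied to `χ - F̂_n`, also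
`G(0) = ∫ Ĝ ≥ C`.
-/

open Metric
open scoped Topology SchwartzMap Convolution Pointwise

section Topology

theorem exists_seq_mem_tendsto_of_forall_mem_closure {X : Type*} [PseudoMetricSpace X]
    {S : ℕ → Set X} {x : X} (hx : ∀ n, x ∈ closure (S n)) :
    ∃ u : ℕ → X, (∀ n, u n ∈ S n) ∧ Tendsto u atTop (𝓝 x) := by
  choose u hu hux using fun n => mem_closure_iff.1 (hx n) (1 / (n + 1 : ℝ)) (by positivity)
  refine ⟨u, hu, tendsto_iff_dist_tendsto_zero.2 ?_⟩
  exact squeeze_zero (fun _ => dist_nonneg) (fun n => (dist_comm (u n) x).trans_le (hux n).le)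
    tendsto_one_div_add_atTop_nhds_zero_nat

theorem tendsto_re_and_eq_ofReal_re {u : ℕ → ℝ} {z : ℂ}
    (h : Tendsto (fun n => (u n : ℂ)) atTop (𝓝 z)) : Tendsto u atTop (𝓝 z.re) ∧ z = z.re := by
  have hre : Tendsto u atTop (𝓝 z.re) := by
    simpa using! (Complex.continuous_re.tendsto z).comp h
  exact ⟨hre, tendsto_nhds_unique h ((Complex.continuous_ofReal.tendsto _).comp hre)⟩

end Topology

section Hilbert

variable {E : Type*} [NormedAddCommGroup E] [InnerProductSpace ℝ E]

theorem apply_eq_of_norm_eq_of_forall_comp_eq {α : Type*} {f : E → α}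
    (hf : ∀ A : E ≃ₗᵢ[ℝ] E, f ∘ A = f) {x y : E} (hxy : ‖x‖ = ‖y‖) : f x = f y := by
  rw [← congrFun (hf (ℝ ∙ (x - y))ᗮ.reflection) x, Function.comp_apply,
    Submodule.reflection_sub hxy]

variable [CompleteSpace E]

theorem exists_mem_forall_norm_sub_sq_le {K : Set E} (hne : K.Nonempty) (hcl : IsClosed K)
    (hK : Convex ℝ K) : ∃ x ∈ K, ∀ y ∈ K, ‖y - x‖ ^ 2 ≤ ‖y‖ ^ 2 - ‖x‖ ^ 2 := by
  obtain ⟨x, hx, hmin⟩ := exists_norm_eq_iInf_of_complete_convex hne hcl.isComplete hK 0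
  refine ⟨x, hx, fun y hy => ?_⟩
  have hobtuse := (norm_eq_iInf_iff_real_inner_le_zero hK hx).1 hmin y hy
  have hexpand := norm_add_sq_real x (y - x)
  rw [zero_sub, inner_neg_left] at hobtuse
  rw [add_sub_cancel] at hexpand
  linarith

theorem nonempty_iInter_of_antitone_of_convex {K : ℕ → Set E} (hK : Antitone K)
    (hne : ∀ n, (K n).Nonempty) (hcl : ∀ n, IsClosed (K n)) (hconv : ∀ n, Convex ℝ (K n))
    (hbdd : Bornology.IsBounded (K 0)) : (⋂ n, K n).Nonempty := by
  choose x hxK hx using fun n => exists_mem_forall_norm_sub_sq_le (hne n) (hcl n) (hconv n)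
  have hle {m n : ℕ} (hmn : m ≤ n) : ‖x n - x m‖ ^ 2 ≤ ‖x n‖ ^ 2 - ‖x m‖ ^ 2 :=
    hx m _ (hK hmn (hxK n))
  have hmono : Monotone fun n => ‖x n‖ ^ 2 := fun m n hmn =>
    sub_nonneg.1 ((sq_nonneg _).trans (hle hmn))
  obtain ⟨M, hM⟩ := hbdd.exists_norm_le
  have habove : BddAbove (Set.range fun n => ‖x n‖ ^ 2) :=
    ⟨M ^ 2, Set.forall_mem_range.2 fun n =>
      pow_le_pow_left₀ (norm_nonneg _) (hM _ (hK n.zero_le (hxK n))) 2⟩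
  set s := ⨆ n, ‖x n‖ ^ 2
  have hlim : Tendsto (fun n => √(s - ‖x n‖ ^ 2)) atTop (𝓝 0) := by
    simpa [s] using ((tendsto_atTop_ciSup hmono habove).const_sub s).sqrt
  have hcauchy : CauchySeq x := by
    refine cauchySeq_of_le_tendsto_0' _ (fun m n hmn => ?_) hlim
    rw [dist_comm, dist_eq_norm]
    exact Real.le_sqrt_of_sq_le ((hle hmn).trans (sub_le_sub_right (le_ciSup habove n) _))
  obtain ⟨y, hy⟩ := cauchySeq_tendsto_of_complete hcauchy
  refine ⟨y, Set.mem_iInter.2 fun m => (hcl m).mem_of_tendsto hy ?_⟩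
  filter_upwards [eventually_ge_atTop m] with n hmn using hK hmn (hxK n)

theorem exists_mem_iInter_closure_forall_eq {S : ℕ → Set E} (hS : Antitone S)
    (hne : ∀ n, (S n).Nonempty) (hconv : ∀ n, Convex ℝ (S n)) (hbdd : Bornology.IsBounded (S 0)) :
    ∃ x ∈ ⋂ n, closure (S n), ∀ y ∈ ⋂ n, closure (S n), ‖y‖ = ‖x‖ → y = x := by
  obtain ⟨x, hx, hmin⟩ := exists_mem_forall_norm_sub_sq_le
    (nonempty_iInter_of_antitone_of_convex (fun _ _ hmn => closure_mono (hS hmn))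
      (fun n => (hne n).closure) (fun _ => isClosed_closure) (fun n => (hconv n).closure)
      hbdd.closure)
    (isClosed_iInter fun _ => isClosed_closure) (convex_iInter fun n => (hconv n).closure)
  refine ⟨x, hx, fun y hy hyx => ?_⟩
  have hsq := hmin y hy
  rw [hyx, sub_self] at hsq
  simpa [sub_eq_zero] using hsq.antisymm (sq_nonneg _)

end Hilbert

section MeasureTheory

variable {α : Type*} [MeasurableSpace α] {μ : Measure α}

theorem integrable_and_integral_le_of_tendsto_ae {f : ℕ → α → ℝ} {g : α → ℝ} {a : ℕ → ℝ} {b : ℝ}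
    (hf : ∀ n, Integrable (f n) μ) (hf0 : ∀ n, 0 ≤ f n)
    (hlim : ∀ᵐ x ∂μ, Tendsto (fun n => f n x) atTop (𝓝 (g x)))
    (ha : ∀ n, ∫ x, f n x ∂μ ≤ a n) (hab : Tendsto a atTop (𝓝 b)) :
    Integrable g μ ∧ ∫ x, g x ∂μ ≤ b := by
  have hgm : AEStronglyMeasurable g μ :=
    aestronglyMeasurable_of_tendsto_ae atTop (fun n => (hf n).1) hlim
  have hg0 : 0 ≤ᵐ[μ] g := hlim.mono fun x hx => ge_of_tendsto' hx fun n => hf0 n x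
  have hb : 0 ≤ b := ge_of_tendsto' hab fun n => (integral_nonneg (hf0 n)).trans (ha n)
  have hfatou : ∫⁻ x, ENNReal.ofReal (g x) ∂μ ≤ ENNReal.ofReal b := by
    calc ∫⁻ x, ENNReal.ofReal (g x) ∂μ
        = ∫⁻ x, liminf (fun n => ENNReal.ofReal (f n x)) atTop ∂μ :=
          lintegral_congr_ae <| hlim.mono fun x hx => (ENNReal.tendsto_ofReal hx).liminf_eq.symm
      _ ≤ liminf (fun n => ∫⁻ x, ENNReal.ofReal (f n x) ∂μ) atTop :=
          lintegral_liminf_le' fun n => (hf n).1.aemeasurable.ennreal_ofReal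
      _ ≤ liminf (fun n => ENNReal.ofReal (a n)) atTop := by
          refine liminf_le_liminf (Eventually.of_forall fun n => ?_)
          rw [← ofReal_integral_eq_lintegral_ofReal (hf n) (.of_forall (hf0 n))]
          exact ENNReal.ofReal_le_ofReal (ha n)
      _ = ENNReal.ofReal b := (ENNReal.tendsto_ofReal hab).liminf_eq
  have hg : Integrable g μ :=
    (lintegral_ofReal_ne_top_iff_integrable hgm hg0).1 (hfatou.trans_lt ENNReal.ofReal_lt_top).ne
  rw [← ofReal_integral_eq_lintegral_ofReal hg hg0, ENNReal.ofReal_le_ofReal_iff hb] at hfatou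
  exact ⟨hg, hfatou⟩

theorem exists_strictMono_tendsto_ae_and_tendsto_ae {E F : Type*} [PseudoEMetricSpace E]
    [PseudoEMetricSpace F] {u : ℕ → α → E} {v : ℕ → α → F} {f : α → E} {g : α → F}
    (hu : TendstoInMeasure μ u atTop f) (hv : TendstoInMeasure μ v atTop g) :
    ∃ k : ℕ → ℕ, StrictMono k ∧ (∀ᵐ x ∂μ, Tendsto (fun n => u (k n) x) atTop (𝓝 (f x))) ∧
      ∀ᵐ x ∂μ, Tendsto (fun n => v (k n) x) atTop (𝓝 (g x)) := by
  obtain ⟨i, hi, hui⟩ := hu.exists_seq_tendsto_ae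
  obtain ⟨j, hj, hvj⟩ := (hv.comp hi.tendsto_atTop).exists_seq_tendsto_ae
  exact ⟨i ∘ j, hi.comp hj, hui.mono fun x hx => hx.comp hj.tendsto_atTop, hvj⟩

theorem closure_subset_of_ae_restrict_mem [TopologicalSpace α] [OpensMeasurableSpace α]
    [μ.IsOpenPosMeasure] {U K : Set α} (hU : IsOpen U) (hK : IsClosed K)
    (h : ∀ᵐ x ∂μ.restrict U, x ∈ K) : closure U ⊆ K := by
  refine closure_minimal (Set.sdiff_eq_empty.1 ?_) hK
  refine (hU.sdiff hK).eq_empty_of_measure_zero (μ := μ) ?_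
  rw [Set.sdiff_eq, Set.inter_comm, ← Measure.restrict_apply hK.isOpen_compl.measurableSet]
  exact h

theorem Lp_two_norm_sq_eq_integral {E : Type*} [NormedAddCommGroup E] [InnerProductSpace ℝ E]
    (f : Lp E 2 μ) : ‖f‖ ^ 2 = ∫ x, ‖f x‖ ^ 2 ∂μ := by
  simp only [← real_inner_self_eq_norm_sq, L2.inner_def]

end MeasureTheory

section Fourier

variable {V : Type*} [NormedAddCommGroup V] [InnerProductSpace ℝ V] [MeasurableSpace V]
  [BorelSpace V] [FiniteDimensional ℝ V]

section NormedSpace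

variable {E : Type*} [NormedAddCommGroup E] [NormedSpace ℂ E]

theorem fourier_congr_ae {f g : V → E} (h : f =ᵐ[volume] g) : 𝓕 f = 𝓕 g := by
  ext y
  simp only [Real.fourier_eq]
  exact integral_congr_ae (h.mono fun x hx => by simp only [hx])

theorem continuous_fourier {f : V → E} (hf : Integrable f) : Continuous (𝓕 f) :=
  VectorFourier.fourierIntegral_continuous Real.continuous_fourierChar
    (L := innerₗ V) continuous_inner hf

theorem norm_fourier_le (f : V → E) (y : V) : ‖𝓕 f y‖ ≤ ∫ x, ‖f x‖ :=
  VectorFourier.norm_fourierIntegral_le_integral_norm _ _ _ _ _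

theorem continuous_fourierInv {f : V → E} (hf : Integrable f) : Continuous (𝓕⁻ f) := by
  rw [Real.fourierInv_eq_fourier_comp_neg]
  exact continuous_fourier hf.comp_neg

theorem norm_fourierInv_le (f : V → E) (x : V) : ‖𝓕⁻ f x‖ ≤ ∫ y, ‖f y‖ := by
  rw [Real.fourierInv_eq_fourier_neg]
  exact norm_fourier_le f _

variable [CompleteSpace E]

theorem integral_fourier_smul_eq_integral_smul_fourier {f : V → ℂ} {g : V → E}
    (hf : Integrable f) (hg : Integrable g) : ∫ y, 𝓕 f y • g y = ∫ x, f x • 𝓕 g x := by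
  simpa using! VectorFourier.integral_fourierIntegral_smul_eq_flip (L := innerₗ V)
    Real.continuous_fourierChar continuous_inner hf hg

theorem integral_fourierInv_smul_eq_integral_smul_fourierInv {f : V → ℂ} {g : V → E}
    (hf : Integrable f) (hg : Integrable g) : ∫ y, 𝓕⁻ f y • g y = ∫ x, f x • 𝓕⁻ g x := by
  rw [Real.fourierInv_eq_fourier_comp_neg,
    integral_fourier_smul_eq_integral_smul_fourier hf.comp_neg hg,
    ← integral_neg_eq_self]
  simp [Real.fourierInv_eq_fourier_neg]

theorem ae_eq_of_forall_integral_schwartz_smul_eq {f g : V → E} (hf : LocallyIntegrable f)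
    (hg : LocallyIntegrable g) (h : ∀ φ : 𝓢(V, ℂ), ∫ x, φ x • f x = ∫ x, φ x • g x) :
    f =ᵐ[volume] g := by
  refine ae_eq_of_integral_contDiff_smul_eq hf hg fun φ hφ hφc => ?_
  have h' := h ((hφc.comp_left Complex.ofReal_zero).toSchwartzMap
    (Complex.ofRealCLM.contDiff.comp hφ))
  change ∫ x, (φ x : ℂ) • f x = ∫ x, (φ x : ℂ) • g x at h'
  simpa only [Complex.coe_smul] using h'

theorem fourierInv_fourier_ae_eq {f : V → E} (hf : Integrable f) (hf' : Integrable (𝓕 f)) :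
    𝓕⁻ (𝓕 f) =ᵐ[volume] f := by
  refine ae_eq_of_forall_integral_schwartz_smul_eq (continuous_fourierInv hf').locallyIntegrable
    hf.locallyIntegrable fun φ => ?_
  rw [← integral_fourierInv_smul_eq_integral_smul_fourierInv φ.integrable hf',
    ← SchwartzMap.fourierInv_coe,
    ← integral_fourier_smul_eq_integral_smul_fourier (𝓕⁻ φ).integrable hf,
    ← SchwartzMap.fourier_coe, FourierTransform.fourier_fourierInv_eq]

end NormedSpace

theorem fourier_Lp_two_ae_eq {E : Type*} [NormedAddCommGroup E] [InnerProductSpace ℂ E]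
    [CompleteSpace E] {f : Lp (α := V) E 2} (hf : Integrable f) :
    (𝓕 f : Lp (α := V) E 2) =ᵐ[volume] 𝓕 (f : V → E) := by
  refine ae_eq_of_forall_integral_schwartz_smul_eq
    ((Lp.memLp _).locallyIntegrable (by norm_num)) (continuous_fourier hf).locallyIntegrable
    fun φ => ?_
  rw [← integral_fourier_smul_eq_integral_smul_fourier φ.integrable hf, ← SchwartzMap.fourier_coe,
    ← Lp.toTemperedDistribution_apply, ← Lp.fourier_toTemperedDistribution_eq,
    TemperedDistribution.fourier_apply, Lp.toTemperedDistribution_apply]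

theorem fourier_mul_fourier_eq_zero_of_support_subset_ball {f g : 𝓢(V, ℂ)} {r s : ℝ} (hr : 0 < r)
    (hs : 0 < s) (hf : Function.support f ⊆ ball 0 r) (hg : Function.support g ⊆ ball 0 s) {y : V}
    (hy : r + s ≤ ‖y‖) : 𝓕 (fun x => 𝓕 f x * 𝓕 g x) y = 0 := by
  let h : 𝓢(V, ℂ) := SchwartzMap.convolution (ContinuousLinearMap.mul ℂ ℂ) f g
  have hfourier : (fun x => 𝓕 f x * 𝓕 g x) = (𝓕 h : 𝓢(V, ℂ)) := by
    ext x
    simp [h, SchwartzMap.fourier_convolution, SchwartzMap.pairing_apply_apply]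
  have hsupp : Function.support h ⊆ ball 0 (r + s) := by
    calc Function.support h
        = Function.support (f ⋆[ContinuousLinearMap.mul ℂ ℂ] g) :=
          congrArg _ (funext (SchwartzMap.convolution_apply _ f g))
      _ ⊆ Function.support f + Function.support g := support_convolution_subset _
      _ ⊆ ball (0 : V) r + ball 0 s := Set.add_subset_add hf hg
      _ = ball 0 (r + s) := by rw [ball_add_ball hr hs, add_zero]
  have hinv : 𝓕 ((𝓕 h : 𝓢(V, ℂ)) : V → ℂ) y = h (-y) := by
    rw [← neg_neg y, ← Real.fourierInv_eq_fourier_neg, neg_neg, ← SchwartzMap.fourierInv_coe,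
      FourierTransform.fourierInv_fourier_eq]
  rw [hfourier, hinv]
  by_contra hne
  have hlt : ‖y‖ < r + s := by simpa using hsupp hne
  exact hlt.not_ge hy

theorem integrable_exp_neg_mul_sq_norm {b : ℝ} (hb : 0 < b) :
    Integrable fun y : V => Real.exp (-b * ‖y‖ ^ 2) := by
  have h := (GaussianFourier.integrable_cexp_neg_mul_sq_norm_add (V := V) (b := (b : ℂ))
    (by simpa) 0 0).norm
  simpa [Complex.norm_exp, ← Complex.ofReal_pow] using h

theorem tendsto_integral_gaussian_mul_fourier {f : V → ℂ} (hf : Integrable f)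
    (hf0 : ContinuousAt f 0) :
    Tendsto (fun c : ℝ => ∫ y : V, (Real.exp (-c⁻¹ * ‖y‖ ^ 2) : ℂ) * 𝓕 f y) atTop (𝓝 (f 0)) := by
  refine (Real.tendsto_integral_gaussian_smul' hf hf0).congr' ?_
  filter_upwards [eventually_gt_atTop 0] with c hc
  have hcast : (fun y : V => (Real.exp (-c⁻¹ * ‖y‖ ^ 2) : ℂ)) =
      fun y => Complex.exp (-((c⁻¹ : ℝ) : ℂ) * ‖y‖ ^ 2) := by
    ext y
    push_cast
    rfl
  have hgauss : Integrable fun y : V => (Real.exp (-c⁻¹ * ‖y‖ ^ 2) : ℂ) :=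
    (integrable_exp_neg_mul_sq_norm (inv_pos.2 hc)).ofReal
  simp_rw [← smul_eq_mul (Complex.ofReal _),
    ← integral_fourier_smul_eq_integral_smul_fourier hgauss hf]
  refine integral_congr_ae (.of_forall fun y => ?_)
  simp only [hcast, fourier_gaussian_innerProductSpace (b := ((c⁻¹ : ℝ) : ℂ)) (by simpa) y]
  rw [Complex.ofReal_inv, div_inv_eq_mul, div_inv_eq_mul, zero_sub, norm_neg,
    smul_eq_mul (π : ℂ), mul_right_comm (-(π : ℂ) ^ 2)]

theorem integrable_gaussian_mul_fourier {f : V → ℂ} (hf : Integrable f) {b : ℝ} (hb : 0 < b) :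
    Integrable fun y => (Real.exp (-b * ‖y‖ ^ 2) : ℂ) * 𝓕 f y :=
  (integrable_exp_neg_mul_sq_norm hb).ofReal.mul_bdd (continuous_fourier hf).aestronglyMeasurable
    (.of_forall (norm_fourier_le f))

theorem tendsto_integral_gaussian_mul_re_fourier {f : V → ℂ} (hf : Integrable f)
    (hf0 : ContinuousAt f 0) :
    Tendsto (fun c : ℝ => ∫ y : V, Real.exp (-c⁻¹ * ‖y‖ ^ 2) * (𝓕 f y).re) atTop
      (𝓝 (f 0).re) := by
  refine ((Complex.continuous_re.tendsto _).comp
    (tendsto_integral_gaussian_mul_fourier hf hf0)).congr' ?_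
  filter_upwards [eventually_gt_atTop 0] with c hc
  have h := integral_re (integrable_gaussian_mul_fourier hf (inv_pos.2 hc))
  simp only [RCLike.re_to_complex, Complex.re_ofReal_mul] at h
  exact h.symm

theorem integrable_re_fourier_of_le {f : V → ℂ} {b : V → ℝ} (hf : Integrable f)
    (hf0 : ContinuousAt f 0) (hb : Integrable b) (hfb : ∀ y, (𝓕 f y).re ≤ b y) :
    Integrable fun y => (𝓕 f y).re := by
  let c (n : ℕ) : ℝ := n + 1
  have hc : Tendsto c atTop atTop :=
    tendsto_atTop_add_const_right _ 1 tendsto_natCast_atTop_atTop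
  let γ (n : ℕ) (y : V) : ℝ := Real.exp (-(c n)⁻¹ * ‖y‖ ^ 2)
  have hγ1 (n : ℕ) (y : V) : ‖γ n y‖ ≤ 1 := by
    rw [Real.norm_of_nonneg (by positivity), Real.exp_le_one_iff, neg_mul, neg_nonpos]
    positivity
  have hγlim (y : V) : Tendsto (γ · y) atTop (𝓝 1) := by
    simpa [γ] using! ((tendsto_inv_atTop_zero.comp hc).neg.mul_const (‖y‖ ^ 2)).rexp
  have hγb (n : ℕ) : Integrable fun y => γ n y * b y :=
    hb.bdd_mul (integrable_exp_neg_mul_sq_norm (by positivity)).1 (.of_forall (hγ1 n))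
  have hγf (n : ℕ) : Integrable fun y => γ n y * (𝓕 f y).re := by
    simpa only [RCLike.re_to_complex, Complex.re_ofReal_mul] using
      (integrable_gaussian_mul_fourier hf (b := (c n)⁻¹) (by positivity)).re
  have hfatou := integrable_and_integral_le_of_tendsto_ae (μ := volume)
    (f := fun n y => γ n y * b y - γ n y * (𝓕 f y).re) (g := fun y => b y - (𝓕 f y).re)
    (fun n => (hγb n).sub (hγf n)) (fun n y => ?_) (.of_forall fun y => ?_) (fun n => ?_)
    (((tendsto_integral_gaussian_mul_re_fourier hf hf0).comp hc).const_sub (∫ y, |b y|))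
  · simpa [Pi.sub_def] using hb.sub hfatou.1
  · exact sub_nonneg.2 (mul_le_mul_of_nonneg_left (hfb y) (Real.exp_nonneg _))
  · simpa using ((hγlim y).mul_const (b y)).sub ((hγlim y).mul_const (𝓕 f y).re)
  · rw [integral_sub (hγb n) (hγf n)]
    refine sub_le_sub_right (integral_mono (hγb n) hb.abs fun y => ?_) _
    calc γ n y * b y ≤ |γ n y| * |b y| := (le_abs_self _).trans_eq (abs_mul _ _)
      _ ≤ |b y| := mul_le_of_le_one_left (abs_nonneg _) (hγ1 n y)

end Fourier

section ReFourier

variable {V : Type*} [NormedAddCommGroup V] [InnerProductSpace ℝ V] [MeasurableSpace V]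
  [BorelSpace V] [FiniteDimensional ℝ V] {F G : V → ℝ}

/-- The real part of the Fourier transform of a real-valued function. It is the whole Fourier
transform when the function is even, see `fourier_ofReal_eq_reFourier`. -/
noncomputable def reFourier (F : V → ℝ) (y : V) : ℝ := (𝓕 (fun x => (F x : ℂ)) y).re

theorem continuous_reFourier (hF : Integrable F) : Continuous (reFourier F) :=
  Complex.continuous_re.comp (continuous_fourier hF.ofReal)

theorem abs_reFourier_le (F : V → ℝ) (y : V) : |reFourier F y| ≤ ∫ x, |F x| := by
  refine (Complex.abs_re_le_norm _).trans ((norm_fourier_le _ y).trans_eq ?_)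
  simp

theorem reFourier_zero (F : V → ℝ) : reFourier F 0 = ∫ x, F x := by
  simp [reFourier, Real.fourier_eq, integral_complex_ofReal]

theorem reFourier_congr_ae (h : F =ᵐ[volume] G) : reFourier F = reFourier G := by
  have hcoe : (fun x => (F x : ℂ)) =ᵐ[volume] fun x => (G x : ℂ) :=
    h.mono fun x hx => congrArg _ hx
  ext y
  rw [reFourier, reFourier, fourier_congr_ae hcoe]

theorem reFourier_add (hF : Integrable F) (hG : Integrable G) (y : V) :
    reFourier (fun x => F x + G x) y = reFourier F y + reFourier G y := by
  have h := congrFun (VectorFourier.fourierIntegral_add Real.continuous_fourierChar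
    (L := innerₗ V) continuous_inner (hF.ofReal (𝕜 := ℂ)) (hG.ofReal (𝕜 := ℂ))) y
  simpa [reFourier, Pi.add_def] using! congrArg Complex.re h

theorem reFourier_const_mul (c : ℝ) (F : V → ℝ) (y : V) :
    reFourier (fun x => c * F x) y = c * reFourier F y := by
  have h := congrFun (VectorFourier.fourierIntegral_const_smul 𝐞 volume (innerₗ V)
    (fun x => (F x : ℂ)) (c : ℂ)) y
  simpa [reFourier, Pi.smul_def] using! congrArg Complex.re h

theorem reFourier_comp (F : V → ℝ) (A : V ≃ₗᵢ[ℝ] V) (y : V) :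
    reFourier (fun x => F (A x)) y = reFourier F (A y) :=
  congrArg Complex.re (Real.fourier_comp_linearIsometry A (fun x => (F x : ℂ)) y)

theorem fourier_ofReal_eq_reFourier (hF : ∀ x, F (-x) = F x) (y : V) :
    𝓕 (fun x => (F x : ℂ)) y = reFourier F y := by
  refine (Complex.conj_eq_iff_re.1 ?_).symm
  rw [Real.fourier_eq, ← integral_conj, ← integral_neg_eq_self]
  congr with x
  simp [Circle.smul_def, hF, ← Circle.coe_inv_eq_conj, ← AddChar.map_neg_eq_inv]

end ReFourier

section CohnElkies

variable {V : Type*} [NormedAddCommGroup V] [InnerProductSpace ℝ V] [MeasurableSpace V]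
  [BorelSpace V] [FiniteDimensional ℝ V] {F G : V → ℝ}

/-- The class of functions admissible in the Cohn–Elkies problem, over which `F 0 / ∫ F` is to be
maximized. As `F` need not be even, the sign condition is on the real part of its transform. -/
structure IsCohnElkies (F : V → ℝ) : Prop where
  continuous : Continuous F
  integrable : Integrable F
  nonneg : ∀ x, 0 ≤ F x
  reFourier_nonpos : ∀ y, 1 ≤ ‖y‖ → reFourier F y ≤ 0

theorem integrable_indicator_ball (c : ℝ) :
    Integrable ((ball (0 : V) 1).indicator fun _ => c) :=
  (integrableOn_const measure_ball_lt_top.ne).integrable_indicator measurableSet_ball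

namespace IsCohnElkies

theorem add (hF : IsCohnElkies F) (hG : IsCohnElkies G) : IsCohnElkies fun x => F x + G x where
  continuous := hF.continuous.add hG.continuous
  integrable := hF.integrable.add hG.integrable
  nonneg x := add_nonneg (hF.nonneg x) (hG.nonneg x)
  reFourier_nonpos y hy := by
    rw [reFourier_add hF.integrable hG.integrable]
    exact add_nonpos (hF.reFourier_nonpos y hy) (hG.reFourier_nonpos y hy)

theorem const_mul (hF : IsCohnElkies F) {c : ℝ} (hc : 0 ≤ c) : IsCohnElkies fun x => c * F x where
  continuous := hF.continuous.const_mul c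
  integrable := hF.integrable.const_mul c
  nonneg x := mul_nonneg hc (hF.nonneg x)
  reFourier_nonpos y hy := by
    rw [reFourier_const_mul]
    exact mul_nonpos_of_nonneg_of_nonpos hc (hF.reFourier_nonpos y hy)

theorem comp_linearIsometryEquiv (hF : IsCohnElkies F) (A : V ≃ₗᵢ[ℝ] V) :
    IsCohnElkies fun x => F (A x) where
  continuous := hF.continuous.comp A.continuous
  integrable := A.measurePreserving.integrable_comp_of_integrable hF.integrable
  nonneg x := hF.nonneg (A x)
  reFourier_nonpos y hy := by
    rw [reFourier_comp]
    exact hF.reFourier_nonpos (A y) (by rwa [A.norm_map])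

theorem integral_pos (hF : IsCohnElkies F) (hF0 : F ≠ 0) : 0 < ∫ x, F x := by
  obtain ⟨x, hx⟩ := Function.ne_iff.1 hF0
  exact integral_pos_of_integrable_nonneg_nonzero hF.continuous hF.integrable hF.nonneg hx

theorem reFourier_le_indicator (hF : IsCohnElkies F) (y : V) :
    reFourier F y ≤ (ball (0 : V) 1).indicator (fun _ => ∫ x, F x) y := by
  by_cases hy : y ∈ ball (0 : V) 1
  · rw [Set.indicator_of_mem hy]
    exact (le_abs_self _).trans ((abs_reFourier_le F y).trans_eq
      (integral_congr_ae (.of_forall fun x => abs_of_nonneg (hF.nonneg x))))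
  · rw [Set.indicator_of_notMem hy]
    exact hF.reFourier_nonpos y (by simpa using hy)

theorem integrable_reFourier (hF : IsCohnElkies F) : Integrable (reFourier F) :=
  integrable_re_fourier_of_le hF.integrable.ofReal
    (Complex.continuous_ofReal.comp hF.continuous).continuousAt
    (integrable_indicator_ball _) hF.reFourier_le_indicator

theorem fourierInv_reFourier (hF : IsCohnElkies F) (heven : ∀ x, F (-x) = F x) (x : V) :
    𝓕⁻ (fun y => (reFourier F y : ℂ)) x = F x := by
  have h := funext (fourier_ofReal_eq_reFourier heven)
  have hcont : Continuous fun x => (F x : ℂ) := Complex.continuous_ofReal.comp hF.continuous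
  rw [← h, hcont.fourierInv_fourier_eq hF.integrable.ofReal
    (h ▸ hF.integrable_reFourier.ofReal)]

theorem integral_reFourier (hF : IsCohnElkies F) (heven : ∀ x, F (-x) = F x) :
    ∫ y, reFourier F y = F 0 := by
  have h := hF.fourierInv_reFourier heven 0
  simp only [Real.fourierInv_eq, inner_zero_right, AddChar.map_zero_eq_one, one_smul,
    integral_complex_ofReal] at h
  exact_mod_cast h

theorem apply_le (hF : IsCohnElkies F) (heven : ∀ x, F (-x) = F x) (x : V) :
    F x ≤ 2 * (volume.real (ball (0 : V) 1) * ∫ x, F x) := by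
  set b := (ball (0 : V) 1).indicator fun _ => ∫ x, F x
  have hb : Integrable b := integrable_indicator_ball _
  have habs (y : V) : |reFourier F y| ≤ 2 * b y - reFourier F y := by
    have hb0 : 0 ≤ b y := Set.indicator_nonneg (fun _ _ => integral_nonneg hF.nonneg) y
    have hrb : reFourier F y ≤ b y := hF.reFourier_le_indicator y
    exact abs_le.2 ⟨by linarith, by linarith⟩
  calc F x ≤ ‖𝓕⁻ (fun y => (reFourier F y : ℂ)) x‖ := by
        rw [hF.fourierInv_reFourier heven, Complex.norm_real]
        exact le_abs_self _
    _ ≤ ∫ y, |reFourier F y| := by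
        simpa using norm_fourierInv_le (fun y => (reFourier F y : ℂ)) x
    _ ≤ ∫ y, (2 * b y - reFourier F y) :=
        integral_mono hF.integrable_reFourier.abs
          ((hb.const_mul 2).sub hF.integrable_reFourier) habs
    _ = 2 * (volume.real (ball (0 : V) 1) * ∫ x, F x) - F 0 := by
        rw [integral_sub (hb.const_mul 2) hF.integrable_reFourier, integral_const_mul,
          integral_indicator_const _ measurableSet_ball, smul_eq_mul, hF.integral_reFourier heven]
    _ ≤ _ := sub_le_self _ (hF.nonneg 0)

end IsCohnElkies

theorem exists_isCohnElkies_pos : ∃ F : V → ℝ, IsCohnElkies F ∧ 0 < F 0 := by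
  -- Squaring the Fourier transform of a bump function makes it nonnegative, and turns the bump into
  -- its self-convolution, which is supported in a ball of twice the radius.
  let φ : ContDiffBump (0 : V) := ⟨1 / 4, 1 / 2, by norm_num, by norm_num⟩
  let ψ : 𝓢(V, ℂ) := (φ.hasCompactSupport.comp_left Complex.ofReal_zero).toSchwartzMap
    (Complex.ofRealCLM.contDiff.comp φ.contDiff)
  have hψφ : (ψ : V → ℂ) = fun x => (φ x : ℂ) := rfl
  have hψ : Function.support ψ ⊆ ball 0 (1 / 2) := fun x hx =>
    φ.support_eq ▸ (by simpa [hψφ] using hx : x ∈ Function.support φ)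
  have hfourier (y : V) : 𝓕 ψ y = reFourier φ y := by
    rw [SchwartzMap.fourier_coe, hψφ, fourier_ofReal_eq_reFourier fun x => φ.neg x]
  have hsq : (fun y => ((reFourier φ y ^ 2 : ℝ) : ℂ)) = fun y => 𝓕 ψ y * 𝓕 ψ y := by
    ext y
    rw [hfourier, Complex.ofReal_pow, sq]
  refine ⟨fun y => reFourier φ y ^ 2, ⟨(continuous_reFourier φ.integrable).pow 2, ?_,
    fun y => sq_nonneg _, fun y hy => ?_⟩, ?_⟩
  · have hint : Integrable fun y => 𝓕 ψ y * 𝓕 ψ y :=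
      (SchwartzMap.pairing (ContinuousLinearMap.mul ℂ ℂ) (𝓕 ψ) (𝓕 ψ)).integrable
    rw [← hsq] at hint
    exact hint.re
  · rw [reFourier, hsq, fourier_mul_fourier_eq_zero_of_support_subset_ball one_half_pos one_half_pos
      hψ hψ (by norm_num [hy]), Complex.zero_re]
  · simp only [reFourier_zero]
    exact pow_pos φ.integral_pos 2

/-- The admissible functions among which the extremizer is sought: evenness makes Fourier inversion
available in the form `IsCohnElkies.fourierInv_reFourier`, and the total mass one turns the ratio
to be maximized into the value at the origin. -/
structure IsNormalizedCohnElkies (F : V → ℝ) : Prop extends IsCohnElkies F where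
  even : ∀ x, F (-x) = F x
  integral_eq_one : ∫ x, F x = 1

theorem IsCohnElkies.exists_isNormalizedCohnElkies (hF : IsCohnElkies F) (hF0 : F ≠ 0) :
    ∃ H : V → ℝ, IsNormalizedCohnElkies H ∧ H 0 = F 0 / ∫ x, F x := by
  have hI := hF.integral_pos hF0
  have hsymm := hF.add (hF.comp_linearIsometryEquiv (LinearIsometryEquiv.neg ℝ))
  refine ⟨fun x => (2 * ∫ x, F x)⁻¹ * (F x + F (-x)), ⟨hsymm.const_mul (by positivity),
    fun x => by rw [neg_neg, add_comm], ?_⟩, ?_⟩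
  · rw [integral_const_mul, integral_add hF.integrable hF.integrable.comp_neg,
      integral_neg_eq_self, ← two_mul, inv_mul_cancel₀ (by positivity)]
  · simp only [neg_zero]
    field_simp
    ring

namespace IsNormalizedCohnElkies

theorem convexComb (hF : IsNormalizedCohnElkies F) (hG : IsNormalizedCohnElkies G) {a b : ℝ}
    (ha : 0 ≤ a) (hb : 0 ≤ b) (hab : a + b = 1) :
    IsNormalizedCohnElkies fun x => a * F x + b * G x where
  toIsCohnElkies := (hF.const_mul ha).add (hG.const_mul hb)
  even x := by rw [hF.even, hG.even]
  integral_eq_one := by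
    rw [integral_add (hF.integrable.const_mul a) (hG.integrable.const_mul b), integral_const_mul,
      integral_const_mul, hF.integral_eq_one, hG.integral_eq_one, mul_one, mul_one, hab]

theorem comp_linearIsometryEquiv (hF : IsNormalizedCohnElkies F) (A : V ≃ₗᵢ[ℝ] V) :
    IsNormalizedCohnElkies fun x => F (A x) where
  toIsCohnElkies := hF.toIsCohnElkies.comp_linearIsometryEquiv A
  even x := by rw [map_neg, hF.even]
  integral_eq_one :=
    (A.measurePreserving.integral_comp A.toHomeomorph.measurableEmbedding F).trans
      hF.integral_eq_one

theorem apply_le (hF : IsNormalizedCohnElkies F) (x : V) :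
    F x ≤ 2 * volume.real (ball (0 : V) 1) := by
  simpa [hF.integral_eq_one] using hF.toIsCohnElkies.apply_le hF.even x

theorem integrable_sq (hF : IsNormalizedCohnElkies F) : Integrable fun x => F x ^ 2 := by
  simp only [sq]
  exact hF.integrable.bdd_mul hF.continuous.aestronglyMeasurable
    (.of_forall fun x => (Real.norm_of_nonneg (hF.nonneg x)).trans_le (hF.apply_le x))

theorem integral_sq_le (hF : IsNormalizedCohnElkies F) :
    ∫ x, F x ^ 2 ≤ 2 * volume.real (ball (0 : V) 1) := by
  calc ∫ x, F x ^ 2 ≤ ∫ x, 2 * volume.real (ball (0 : V) 1) * F x := by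
        refine integral_mono hF.integrable_sq (hF.integrable.const_mul _) fun x => ?_
        rw [sq]
        exact mul_le_mul_of_nonneg_right (hF.apply_le x) (hF.nonneg x)
    _ = 2 * volume.real (ball (0 : V) 1) := by
        rw [integral_const_mul, hF.integral_eq_one, mul_one]

theorem memLp_two (hF : IsNormalizedCohnElkies F) : MemLp (fun x => (F x : ℂ)) 2 :=
  ((memLp_two_iff_integrable_sq hF.integrable.1).2 hF.integrable_sq).ofReal

end IsNormalizedCohnElkies

variable (V) in
/-- The normalized admissible functions with value at least `c` at the origin, as elements of `L²`.
They are viewed as complex functions so that the `L²` Fourier transform applies to them. -/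
def l2Slice (c : ℝ) : Set (Lp ℂ 2 (volume : Measure V)) :=
  {e | ∃ F : V → ℝ, IsNormalizedCohnElkies F ∧ c ≤ F 0 ∧ e =ᵐ[volume] fun x => (F x : ℂ)}

theorem antitone_l2Slice : Antitone (l2Slice V) :=
  fun _ _ hab _ ⟨F, hF, hF0, he⟩ => ⟨F, hF, hab.trans hF0, he⟩

theorem nonempty_l2Slice {c : ℝ} (hF : IsNormalizedCohnElkies F) (hc : c ≤ F 0) :
    (l2Slice V c).Nonempty :=
  ⟨hF.memLp_two.toLp _, F, hF, hc, hF.memLp_two.coeFn_toLp⟩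

theorem convex_l2Slice (c : ℝ) : Convex ℝ (l2Slice V c) := by
  rintro e ⟨F, hF, hcF, he⟩ e' ⟨F', hF', hcF', he'⟩ a b ha hb hab
  refine ⟨fun x => a * F x + b * F' x, hF.convexComb hF' ha hb hab, ?_, ?_⟩
  · calc c = a * c + b * c := by rw [← add_mul, hab, one_mul]
      _ ≤ a * F 0 + b * F' 0 := by gcongr
  · filter_upwards [Lp.coeFn_add (a • e) (b • e'), Lp.coeFn_smul a e, Lp.coeFn_smul b e', he, he']
      with x hadd hsmul hsmul' hex hex'
    rw [hadd, Pi.add_apply, hsmul, hsmul', Pi.smul_apply, Pi.smul_apply, hex, hex']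
    simp

theorem isBounded_l2Slice (c : ℝ) : Bornology.IsBounded (l2Slice V c) := by
  refine isBounded_iff_forall_norm_le.2 ⟨√(2 * volume.real (ball (0 : V) 1)), ?_⟩
  rintro e ⟨F, hF, -, he⟩
  refine Real.le_sqrt_of_sq_le ?_
  calc ‖e‖ ^ 2 = ∫ x, F x ^ 2 := by
        rw [Lp_two_norm_sq_eq_integral]
        exact integral_congr_ae (he.mono fun x hx => by simp [hx])
    _ ≤ 2 * volume.real (ball (0 : V) 1) := hF.integral_sq_le

theorem compMeasurePreserving_mem_l2Slice (A : V ≃ₗᵢ[ℝ] V) {c : ℝ} {e : Lp ℂ 2 (volume : Measure V)}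
    (he : e ∈ l2Slice V c) :
    Lp.compMeasurePreserving A A.measurePreserving e ∈ l2Slice V c := by
  obtain ⟨F, hF, hcF, heF⟩ := he
  exact ⟨fun x => F (A x), hF.comp_linearIsometryEquiv A, by simpa using hcF,
    (Lp.coeFn_compMeasurePreserving e A.measurePreserving).trans
      (A.measurePreserving.quasiMeasurePreserving.ae_eq_comp heF)⟩

theorem exists_seq_tendsto_ae_of_mem_closure_l2Slice {c : ℕ → ℝ} {e : Lp ℂ 2 (volume : Measure V)}
    (he : ∀ n, e ∈ closure (l2Slice V (c n))) :
    ∃ (k : ℕ → ℕ) (F : ℕ → V → ℝ), StrictMono k ∧ (∀ n, IsNormalizedCohnElkies (F n)) ∧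
      (∀ n, c (k n) ≤ F n 0) ∧
      (∀ᵐ x, Tendsto (fun n => (F n x : ℂ)) atTop (𝓝 (e x))) ∧
      ∀ᵐ y, Tendsto (fun n => (reFourier (F n) y : ℂ)) atTop
        (𝓝 ((𝓕 e : Lp ℂ 2 (volume : Measure V)) y)) := by
  obtain ⟨u, hu, hue⟩ := exists_seq_mem_tendsto_of_forall_mem_closure he
  choose F hF hcF huF using hu
  have hue' : Tendsto (fun n => 𝓕 (u n)) atTop (𝓝 (𝓕 e)) :=
    ((FourierTransform.fourierCLM ℂ (Lp ℂ 2 (volume : Measure V))).continuous.tendsto e).comp hue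
  have huF' (n : ℕ) : (𝓕 (u n) : Lp ℂ 2 (volume : Measure V)) =ᵐ[volume]
      fun y => (reFourier (F n) y : ℂ) := by
    have hint : Integrable (u n) := (hF n).integrable.ofReal.congr (huF n).symm
    filter_upwards [fourier_Lp_two_ae_eq hint] with y hy
    rw [hy, fourier_congr_ae (huF n), fourier_ofReal_eq_reFourier (hF n).even]
  obtain ⟨k, hk, hlim, hlim'⟩ := exists_strictMono_tendsto_ae_and_tendsto_ae
    (tendstoInMeasure_of_tendsto_Lp hue) (tendstoInMeasure_of_tendsto_Lp hue')
  refine ⟨k, F ∘ k, hk, fun n => hF (k n), fun n => hcF (k n), ?_, ?_⟩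
  · filter_upwards [hlim, ae_all_iff.2 huF] with x hx hFx
    simpa [hFx] using! hx
  · filter_upwards [hlim', ae_all_iff.2 huF'] with y hy hFy
    simpa [hFy] using! hy

section Limit

variable {F : ℕ → V → ℝ}

theorem integrable_and_le_integral_of_tendsto_reFourier (hF : ∀ n, IsNormalizedCohnElkies (F n))
    {c : ℕ → ℝ} {C : ℝ} (hcF : ∀ n, c n ≤ F n 0) (hc : Tendsto c atTop (𝓝 C)) {p : V → ℝ}
    (hp : ∀ᵐ y, Tendsto (fun n => reFourier (F n) y) atTop (𝓝 (p y))) :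
    Integrable p ∧ C ≤ ∫ y, p y := by
  set b : V → ℝ := (ball (0 : V) 1).indicator fun _ => 1
  have hb : Integrable b := integrable_indicator_ball 1
  have hrb (n : ℕ) (y : V) : reFourier (F n) y ≤ b y := by
    simpa only [(hF n).integral_eq_one] using (hF n).reFourier_le_indicator y
  have hintegral (n : ℕ) : ∫ y, (b y - reFourier (F n) y) ≤ (∫ y, b y) - c n := by
    rw [integral_sub hb (hF n).integrable_reFourier, (hF n).integral_reFourier (hF n).even]
    exact sub_le_sub_left (hcF n) _
  -- Fatou applies because the Fourier transforms are all dominated by the indicator of the ball.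
  obtain ⟨hint, hle⟩ := integrable_and_integral_le_of_tendsto_ae (μ := volume)
    (f := fun n y => b y - reFourier (F n) y) (g := fun y => b y - p y)
    (fun n => hb.sub (hF n).integrable_reFourier) (fun n y => sub_nonneg.2 (hrb n y))
    (hp.mono fun y hy => hy.const_sub _) hintegral (hc.const_sub _)
  have hpint : Integrable p := by simpa [Pi.sub_def] using hb.sub hint
  rw [integral_sub hb hpint] at hle
  exact ⟨hpint, by linarith⟩

theorem reFourier_nonpos_of_tendsto_reFourier (hF : ∀ n, IsCohnElkies (F n)) {g : V → ℝ}
    (hg : Integrable g)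
    (hlim : ∀ᵐ y, Tendsto (fun n => reFourier (F n) y) atTop (𝓝 (reFourier g y))) {y : V}
    (hy : 1 ≤ ‖y‖) : reFourier g y ≤ 0 := by
  have hsub : closure (closedBall (0 : V) 1)ᶜ ⊆ {y | reFourier g y ≤ 0} := by
    refine closure_subset_of_ae_restrict_mem (μ := volume) isClosed_closedBall.isOpen_compl
      (isClosed_le (continuous_reFourier hg) continuous_const) ?_
    filter_upwards [ae_restrict_of_ae hlim, ae_restrict_mem measurableSet_closedBall.compl]
      with z hz hmem
    have hz1 : 1 < ‖z‖ := by simpa using hmem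
    exact le_of_tendsto' hz fun n => (hF n).reFourier_nonpos z hz1.le
  rw [closure_compl, interior_closedBall _ one_ne_zero] at hsub
  exact hsub (by simpa using hy)

end Limit

theorem exists_isCohnElkies_ae_eq {g : V → ℝ} (hg : Integrable g) (hg0 : 0 ≤ᵐ[volume] g)
    (hg' : Integrable (𝓕 fun x => (g x : ℂ))) (hle : ∀ y, 1 ≤ ‖y‖ → reFourier g y ≤ 0) :
    ∃ G : V → ℝ, IsCohnElkies G ∧ G =ᵐ[volume] g ∧ G 0 = ∫ y, reFourier g y := by
  let G (x : V) : ℝ := (𝓕⁻ (𝓕 fun x => (g x : ℂ)) x).re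
  have hGg : G =ᵐ[volume] g :=
    (fourierInv_fourier_ae_eq hg.ofReal hg').mono fun x hx => by
      simp only [G, hx, Complex.ofReal_re]
  have hGc : Continuous G := Complex.continuous_re.comp (continuous_fourierInv hg')
  have hG0 : closure Set.univ ⊆ {x | 0 ≤ G x} := by
    refine closure_subset_of_ae_restrict_mem (μ := volume) isOpen_univ
      (isClosed_le continuous_const hGc) ?_
    filter_upwards [ae_restrict_of_ae hg0, ae_restrict_of_ae hGg] with x hx hGx
    exact hx.trans_eq hGx.symm
  refine ⟨G, ⟨hGc, hg.congr hGg.symm, fun x => hG0 (subset_closure (Set.mem_univ x)),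
    fun y hy => ?_⟩, hGg, ?_⟩
  · rw [reFourier_congr_ae hGg]
    exact hle y hy
  · simpa [G, Real.fourierInv_eq, reFourier] using (integral_re hg').symm

theorem exists_isCohnElkies_of_mem_closure_l2Slice {c : ℕ → ℝ} {C : ℝ}
    (hc : Tendsto c atTop (𝓝 C)) {e : Lp ℂ 2 (volume : Measure V)}
    (he : ∀ n, e ∈ closure (l2Slice V (c n))) :
    ∃ G : V → ℝ, IsCohnElkies G ∧ e =ᵐ[volume] (fun x => (G x : ℂ)) ∧ ∫ x, G x ≤ 1 ∧ C ≤ G 0 := by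
  obtain ⟨k, F, hk, hF, hcF, hFe, hFe'⟩ := exists_seq_tendsto_ae_of_mem_closure_l2Slice he
  let g (x : V) : ℝ := (e x).re
  have hFg : ∀ᵐ x, Tendsto (fun n => F n x) atTop (𝓝 (g x)) :=
    hFe.mono fun x hx => (tendsto_re_and_eq_ofReal_re hx).1
  have heg : e =ᵐ[volume] fun x => (g x : ℂ) :=
    hFe.mono fun x hx => (tendsto_re_and_eq_ofReal_re hx).2
  obtain ⟨hg, hg1⟩ := integrable_and_integral_le_of_tendsto_ae (fun n => (hF n).integrable)
    (fun n => (hF n).nonneg) hFg (fun n => (hF n).integral_eq_one.le) tendsto_const_nhds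
  have hFe' : ∀ᵐ y, Tendsto (fun n => (reFourier (F n) y : ℂ)) atTop
      (𝓝 (𝓕 (fun x => (g x : ℂ)) y)) := by
    filter_upwards [hFe', fourier_Lp_two_ae_eq (hg.ofReal.congr heg.symm)] with y hy hey
    rwa [hey, fourier_congr_ae heg] at hy
  have hFg' : ∀ᵐ y, Tendsto (fun n => reFourier (F n) y) atTop (𝓝 (reFourier g y)) :=
    hFe'.mono fun y hy => (tendsto_re_and_eq_ofReal_re hy).1
  obtain ⟨hg', hC⟩ := integrable_and_le_integral_of_tendsto_reFourier hF hcF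
    (hc.comp hk.tendsto_atTop) hFg'
  have hgreal : 𝓕 (fun x => (g x : ℂ)) =ᵐ[volume] fun y => (reFourier g y : ℂ) :=
    hFe'.mono fun y hy => (tendsto_re_and_eq_ofReal_re hy).2
  obtain ⟨G, hG, hGg, hG0⟩ := exists_isCohnElkies_ae_eq hg
    (hFg.mono fun x hx => ge_of_tendsto' hx fun n => (hF n).nonneg x)
    (hg'.ofReal.congr hgreal.symm)
    fun y => reFourier_nonpos_of_tendsto_reFourier (fun n => (hF n).toIsCohnElkies) hg hFg'
  refine ⟨G, hG, heg.trans (hGg.mono fun x hx => by simp only [hx]), ?_, hC.trans_eq hG0.symm⟩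
  rwa [integral_congr_ae hGg]

theorem exists_mem_closure_l2Slice_forall_compMeasurePreserving_eq {c : ℕ → ℝ} (hc : Monotone c)
    (hne : ∀ n, (l2Slice V (c n)).Nonempty) :
    ∃ e : Lp ℂ 2 (volume : Measure V), (∀ n, e ∈ closure (l2Slice V (c n))) ∧
      ∀ A : V ≃ₗᵢ[ℝ] V, Lp.compMeasurePreserving A A.measurePreserving e = e := by
  obtain ⟨e, he, huniq⟩ := exists_mem_iInter_closure_forall_eq (antitone_l2Slice.comp_monotone hc)
    hne (fun n => convex_l2Slice (c n)) (isBounded_l2Slice (c 0))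
  rw [Set.mem_iInter] at he
  refine ⟨e, he, fun A => huniq _ (Set.mem_iInter.2 fun n => ?_)
    (Lp.norm_compMeasurePreserving e A.measurePreserving)⟩
  exact map_mem_closure (Lp.isometry_compMeasurePreserving A.measurePreserving).continuous (he n)
    fun _ => compMeasurePreserving_mem_l2Slice A

theorem comp_eq_of_compMeasurePreserving_eq (hG : Continuous G) {e : Lp ℂ 2 (volume : Measure V)}
    (heG : e =ᵐ[volume] fun x => (G x : ℂ)) {A : V ≃ₗᵢ[ℝ] V}
    (he : Lp.compMeasurePreserving A A.measurePreserving e = e) : G ∘ A = G := by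
  refine ((hG.comp A.continuous).ae_eq_iff_eq volume hG).1 ?_
  have hcomp := Lp.coeFn_compMeasurePreserving e A.measurePreserving
  rw [he] at hcomp
  filter_upwards [hcomp, heG, A.measurePreserving.quasiMeasurePreserving.ae_eq_comp heG]
    with x hx hGx hGAx
  exact Complex.ofReal_injective (hGAx.symm.trans (hx.symm.trans hGx))

theorem exists_isCohnElkies_radial_of_isLUB {C : ℝ}
    (hC : IsLUB {r | ∃ F : V → ℝ, IsNormalizedCohnElkies F ∧ r = F 0} C) :
    ∃ G : V → ℝ, IsCohnElkies G ∧ (∀ x y, ‖x‖ = ‖y‖ → G x = G y) ∧ ∫ x, G x ≤ 1 ∧ C ≤ G 0 := by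
  let c (n : ℕ) : ℝ := C - 1 / (n + 1)
  have hcC : Tendsto c atTop (𝓝 C) := by
    simpa [c] using tendsto_one_div_add_atTop_nhds_zero_nat.const_sub C
  have hc : Monotone c := fun m n hmn => sub_le_sub_left (Nat.one_div_le_one_div hmn) C
  have hne (n : ℕ) : (l2Slice V (c n)).Nonempty := by
    obtain ⟨_, ⟨F, hF, rfl⟩, hlt, -⟩ := hC.exists_between (sub_lt_self C Nat.one_div_pos_of_nat)
    exact nonempty_l2Slice hF hlt.le
  obtain ⟨e, he, heA⟩ := exists_mem_closure_l2Slice_forall_compMeasurePreserving_eq hc hne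
  obtain ⟨G, hG, heG, hG1, hG0⟩ := exists_isCohnElkies_of_mem_closure_l2Slice hcC he
  exact ⟨G, hG, fun _ _ => apply_eq_of_norm_eq_of_forall_comp_eq fun A =>
    comp_eq_of_compMeasurePreserving_eq hG.continuous heG (heA A), hG1, hG0⟩

variable (V) in
theorem exists_isLUB_isNormalizedCohnElkies :
    ∃ C > 0, IsLUB {r | ∃ F : V → ℝ, IsNormalizedCohnElkies F ∧ r = F 0} C := by
  obtain ⟨F, hF, hF0⟩ := exists_isCohnElkies_pos (V := V)
  have hne : F ≠ 0 := fun h => hF0.ne' (congrFun h 0)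
  obtain ⟨H, hH, hH0⟩ := hF.exists_isNormalizedCohnElkies hne
  have hlub := isLUB_csSup (s := {r | ∃ F : V → ℝ, IsNormalizedCohnElkies F ∧ r = F 0})
    ⟨H 0, H, hH, rfl⟩ ⟨_, by rintro _ ⟨F, hF, rfl⟩; exact hF.apply_le 0⟩
  refine ⟨_, ?_, hlub⟩
  exact (hH0 ▸ div_pos hF0 (hF.integral_pos hne)).trans_le (hlub.1 ⟨H, hH, rfl⟩)

variable (V) in
theorem exists_isCohnElkies_radial_isGreatest :
    ∃ G : V → ℝ, IsCohnElkies G ∧ G ≠ 0 ∧ (∀ x y, ‖x‖ = ‖y‖ → G x = G y) ∧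
      IsGreatest {r | ∃ F : V → ℝ, IsCohnElkies F ∧ F ≠ 0 ∧ r = F 0 / ∫ x, F x}
        (G 0 / ∫ x, G x) := by
  obtain ⟨C, hC0, hC⟩ := exists_isLUB_isNormalizedCohnElkies V
  obtain ⟨G, hG, hrad, hG1, hCG⟩ := exists_isCohnElkies_radial_of_isLUB hC
  have hne : G ≠ 0 := fun h => (hC0.trans_le hCG).ne' (congrFun h 0)
  refine ⟨G, hG, hne, hrad, ⟨G, hG, hne, rfl⟩, ?_⟩
  rintro _ ⟨F, hF, hF0, rfl⟩
  obtain ⟨H, hH, hHF⟩ := hF.exists_isNormalizedCohnElkies hF0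
  calc F 0 / ∫ x, F x = H 0 := hHF.symm
    _ ≤ C := hC.1 ⟨H, hH, rfl⟩
    _ ≤ G 0 := hCG
    _ ≤ G 0 / ∫ x, G x := le_div_self (hG.nonneg 0) (hG.integral_pos hne) hG1

end CohnElkies

theorem exists_radial_extremizer_CohnElkies_general (V : Type*) [NormedAddCommGroup V]
    [InnerProductSpace ℝ V] [FiniteDimensional ℝ V] [MeasurableSpace V] [BorelSpace V] :
    ∃ G : V → ℝ,
      Continuous G ∧ Integrable G ∧ G ≠ 0 ∧ (∀ x, 0 ≤ G x) ∧
      (∀ y : V, 1 ≤ ‖y‖ → (𝓕 (fun x => (G x : ℂ)) y).re ≤ 0) ∧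
      (∀ x y : V, ‖x‖ = ‖y‖ → G x = G y) ∧
      IsGreatest { r : ℝ | ∃ F : V → ℝ,
          Continuous F ∧ Integrable F ∧ F ≠ 0 ∧ (∀ x, 0 ≤ F x) ∧
          (∀ y : V, 1 ≤ ‖y‖ → (𝓕 (fun x => (F x : ℂ)) y).re ≤ 0) ∧
          r = F 0 / (𝓕 (fun x => (F x : ℂ)) 0).re }
        (G 0 / (𝓕 (fun x => (G x : ℂ)) 0).re) := by
  obtain ⟨G, hG, hne, hrad, -, hmax⟩ := exists_isCohnElkies_radial_isGreatest V
  refine ⟨G, hG.continuous, hG.integrable, hne, hG.nonneg, hG.reFourier_nonpos, hrad,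
    ⟨G, hG.continuous, hG.integrable, hne, hG.nonneg, hG.reFourier_nonpos, rfl⟩, ?_⟩
  rintro _ ⟨F, hFc, hFi, hF0, hFnn, hFft, rfl⟩
  change F 0 / reFourier F 0 ≤ G 0 / reFourier G 0
  rw [reFourier_zero, reFourier_zero]
  exact hmax ⟨F, ⟨hFc, hFi, hFnn, hFft⟩, hF0, rfl⟩

/-- Existence of a radial extremizer for the Cohn–Elkies problem in dimension d. -/
theorem exists_radial_extremizer_CohnElkies (d : ℕ) (hd : 1 ≤ d) :
    ∃ G : EuclideanSpace ℝ (Fin d) → ℝ,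
      Continuous G ∧ Integrable G ∧ G ≠ 0 ∧ (∀ x, 0 ≤ G x) ∧
      (∀ y : EuclideanSpace ℝ (Fin d), 1 ≤ ‖y‖ → (𝓕 (fun x => (G x : ℂ)) y).re ≤ 0) ∧
      (∀ x y : EuclideanSpace ℝ (Fin d), ‖x‖ = ‖y‖ → G x = G y) ∧
      G 0 / (𝓕 (fun x => (G x : ℂ)) 0).re =
        sSup { r : ℝ | ∃ F : EuclideanSpace ℝ (Fin d) → ℝ,
          Continuous F ∧ Integrable F ∧ F ≠ 0 ∧ (∀ x, 0 ≤ F x) ∧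
          (∀ y : EuclideanSpace ℝ (Fin d), 1 ≤ ‖y‖ → (𝓕 (fun x => (F x : ℂ)) y).re ≤ 0) ∧
          r = F 0 / (𝓕 (fun x => (F x : ℂ)) 0).re } := by
  obtain ⟨G, hc, hi, hne, hnn, hft, hrad, hG⟩ :=
    exists_radial_extremizer_CohnElkies_general (EuclideanSpace ℝ (Fin d))
  exact ⟨G, hc, hi, hne, hnn, hft, hrad, hG.csSup_eq.symm⟩
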